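/- If there exists an s-extremal singly even self-dual [n, n/2, d] code with d ≡ 0 (mod 4), then n ≤ 6d − 4. In particular, if there exists an s-extremal singly even self-dual code of length n with minimum weight 8, then n ≤ 44. -/

import Mathlib

open Finset

/-- Hamming weight of a binary vector. -/
def wt {n : ℕ} (x : Fin n → ZMod 2) : ℕ := hammingNorm x

/-- The dual of a set of binary vectors with respect to the standard inner product. -/
def dualSet {n : ℕ} (C : Set (Fin n → ZMod 2)) : Set (Fin n → ZMod 2) :=
  {x | ∀ y ∈ C, ∑ i, x i * y i = 0}

/-- A binary linear code is self-dual if it equals its dual code. -/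
def IsSelfDual {n : ℕ} (C : Submodule (ZMod 2) (Fin n → ZMod 2)) : Prop :=
  (C : Set (Fin n → ZMod 2)) = dualSet (C : Set (Fin n → ZMod 2))

/-- A self-dual code is singly even if some codeword has weight not divisible by 4. -/
def IsSinglyEvenSelfDual {n : ℕ} (C : Submodule (ZMod 2) (Fin n → ZMod 2)) : Prop :=
  IsSelfDual C ∧ ∃ x ∈ C, ¬ (4 ∣ wt x)

/-- The doubly even subcode `C₀` of `C` (as a set): codewords of weight ≡ 0 (mod 4). -/
def evenSub {n : ℕ} (C : Submodule (ZMod 2) (Fin n → ZMod 2)) : Set (Fin n → ZMod 2) :=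
  {x | x ∈ C ∧ 4 ∣ wt x}

/-- The shadow `S = C₀^⊥ \ C` of a singly even self-dual code. -/
def shadow {n : ℕ} (C : Submodule (ZMod 2) (Fin n → ZMod 2)) : Set (Fin n → ZMod 2) :=
  dualSet (evenSub C) \ (C : Set (Fin n → ZMod 2))

/-- The minimum (nonzero) weight of a set of vectors. -/
noncomputable def minWtSet {n : ℕ} (S : Set (Fin n → ZMod 2)) : ℕ :=
  sInf {w | ∃ x ∈ S, x ≠ 0 ∧ wt x = w}

/-- The minimum weight of a code. -/
noncomputable def minWt {n : ℕ} (C : Submodule (ZMod 2) (Fin n → ZMod 2)) : ℕ :=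
  minWtSet (C : Set (Fin n → ZMod 2))

/-- A singly even self-dual code of length `n` is s-extremal if
`d(S) = n/2 + 4 - 2 d(C)`. -/
def IsSExtremal {n : ℕ} (C : Submodule (ZMod 2) (Fin n → ZMod 2)) : Prop :=
  IsSinglyEvenSelfDual C ∧
    (minWtSet (shadow C) : ℤ) = ((n / 2 : ℕ) : ℤ) + 4 - 2 * (minWt C : ℤ)

/-- Two codes are equivalent if one is obtained from the other by permuting coordinates. -/
def CodeEquiv {n : ℕ} (C D : Submodule (ZMod 2) (Fin n → ZMod 2)) : Prop :=
  ∃ σ : Equiv.Perm (Fin n),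
    Submodule.map (LinearMap.funLeft (ZMod 2) (ZMod 2) σ) C = D

/-- The neighbor `C₀ ∪ (t + C₀)` of `C` obtained from a shadow vector `t`:
the span of the doubly even subcode together with `t`. -/
def neighborCode {n : ℕ} (C : Submodule (ZMod 2) (Fin n → ZMod 2))
    (t : Fin n → ZMod 2) : Submodule (ZMod 2) (Fin n → ZMod 2) :=
  Submodule.span (ZMod 2) (evenSub C ∪ {t})


open PowerSeries in
/-- Lagrange functional. -/
noncomputable def lagL (v : PowerSeries ℝ) (k : ℕ) (F : PowerSeries ℝ) : ℝ :=
  coeff k (F * v ^ k) - coeff (k - 1) (F * v ^ (k - 1) * PowerSeries.derivative ℝ v)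

open PowerSeries in
lemma lagL_pow (u v : PowerSeries ℝ) (huv : u * v = 1) (k j : ℕ) (hj : j < k) :
    lagL v k (X ^ j * u ^ j) = 0 := by
  obtain ⟨m, rfl⟩ : ∃ m, k = m + 1 + j := ⟨k - j - 1, by omega⟩
  have e1 : X ^ j * u ^ j * v ^ (m + 1 + j) = X ^ j * v ^ (m + 1) := by
    calc _ = X ^ j * v ^ (m + 1) * (u * v) ^ j := by ring
      _ = _ := by rw [huv]; simp
  have e2 : X ^ j * u ^ j * v ^ (m + 1 + j - 1) * PowerSeries.derivative ℝ v
      = X ^ j * (v ^ m * PowerSeries.derivative ℝ v) := by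
    rw [show m + 1 + j - 1 = m + j by omega]
    calc _ = X ^ j * (v ^ m * PowerSeries.derivative ℝ v) * (u * v) ^ j := by ring
      _ = _ := by rw [huv]; simp
  unfold lagL
  rw [e1, e2, show m + 1 + j - 1 = m + j by omega, coeff_X_pow_mul, coeff_X_pow_mul]
  have h := coeff_derivative (R := ℝ) (v ^ (m + 1)) m
  rw [Derivation.leibniz_pow] at h
  simp only [Nat.add_sub_cancel, smul_eq_mul, nsmul_eq_mul, Nat.cast_add, Nat.cast_one] at h
  have h2 : ((m : PowerSeries ℝ) + 1) = C (m + 1 : ℝ) := by simp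
  rw [h2, coeff_C_mul] at h
  have : (m + 1 : ℝ) ≠ 0 := by positivity
  have : coeff m (v ^ m * PowerSeries.derivative ℝ v) = coeff (m + 1) (v ^ (m + 1)) := by
    apply mul_left_cancel₀ this; rw [h]; ring
  rw [this]; ring

open PowerSeries in
lemma lagL_parts (v f : PowerSeries ℝ) (k : ℕ) :
    ((k : ℝ) + 1) * lagL v (k + 1) f = coeff k (PowerSeries.derivative ℝ f * v ^ (k + 1)) := by
  have h := coeff_derivative (R := ℝ) (f * v ^ (k + 1)) k
  rw [Derivation.leibniz, Derivation.leibniz_pow] at h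
  simp only [Nat.add_sub_cancel, smul_eq_mul, nsmul_eq_mul, Nat.cast_add, Nat.cast_one] at h
  have h2 : ((k : PowerSeries ℝ) + 1) = C (k + 1 : ℝ) := by simp
  rw [h2, map_add, show f * (C (k + 1 : ℝ) * (v ^ k * PowerSeries.derivative ℝ v)) =
    C (k + 1 : ℝ) * (f * v ^ k * PowerSeries.derivative ℝ v) by ring, coeff_C_mul] at h
  unfold lagL
  simp only [Nat.add_sub_cancel]
  rw [mul_comm (PowerSeries.derivative ℝ f)]
  linarith

open PowerSeries in
lemma lagL_high (v G : PowerSeries ℝ) (k : ℕ) :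
    lagL v (k + 1) (X ^ (k + 1) * G) = constantCoeff G * constantCoeff v ^ (k + 1) := by
  unfold lagL
  rw [mul_assoc, mul_assoc, mul_assoc, coeff_X_pow_mul', coeff_X_pow_mul']
  simp

lemma lagL_add (v F G : PowerSeries ℝ) (k : ℕ) : lagL v k (F + G) = lagL v k F + lagL v k G := by
  unfold lagL; simp only [add_mul, map_add]; ring

lemma lagL_sum (v : PowerSeries ℝ) (k : ℕ) (s : Finset ℕ) (c : ℕ → ℝ) (F : ℕ → PowerSeries ℝ) :
    lagL v k (∑ j ∈ s, PowerSeries.C (c j) * F j) = ∑ j ∈ s, c j * lagL v k (F j) := by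
  unfold lagL
  simp only [Finset.sum_mul, map_sum, ← Finset.sum_sub_distrib, mul_assoc, PowerSeries.coeff_C_mul,
    mul_sub]

/-- Alternating sign power series. -/
def AltSign (F : PowerSeries ℝ) : Prop := ∀ i, 0 ≤ (-1 : ℝ) ^ i * PowerSeries.coeff i F

lemma AltSign.mul {F G : PowerSeries ℝ} (hF : AltSign F) (hG : AltSign G) : AltSign (F * G) := by
  intro i
  rw [PowerSeries.coeff_mul, Finset.mul_sum]
  apply Finset.sum_nonneg
  intro p hp
  rw [Finset.HasAntidiagonal.mem_antidiagonal] at hp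
  have := mul_nonneg (hF p.1) (hG p.2)
  rw [← hp, pow_add]
  linarith

lemma AltSign.pow {F : PowerSeries ℝ} (hF : AltSign F) (r : ℕ) : AltSign (F ^ r) := by
  induction r with
  | zero =>
    intro i
    rw [pow_zero, PowerSeries.coeff_one]
    split_ifs with h <;> simp [h]
  | succ r ih => rw [pow_succ]; exact ih.mul hF

open PowerSeries in
lemma altSign_b : AltSign (1 - X) := by
  intro i
  rw [map_sub, coeff_one, coeff_X]
  rcases i with _ | _ | i <;> simp

open PowerSeries in
lemma altSign_w (w : PowerSeries ℝ) (hw : (1 - X ^ 2) * w = 1) : AltSign w := by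
  have e : w = 1 + X ^ 2 * w := by linear_combination hw
  have h : ∀ i, 0 ≤ (-1 : ℝ) ^ i * coeff i w := by
    intro i
    induction i using Nat.strong_induction_on with
    | _ i ih =>
      rw [e, map_add, coeff_X_pow_mul', coeff_one]
      rcases i with _ | _ | i
      · simp
      · simp
      · simpa [pow_add] using ih i (by omega)
  exact h

open PowerSeries in
/-- The final contradiction at the level of power series. -/
lemma ps_final (k r m : ℕ) (hk : Odd k) (hm : m + 1 = 6 * (k + 1) + r) (G P : PowerSeries ℝ)
    (c : ℕ → ℝ)
    (hP : P = 1 + X ^ (k + 1) * G)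
    (hs : P = ∑ j ∈ range (k + 1), C (c j) * ((1 + X) ^ (m - 4 * j) * (X * (1 - X) ^ 2) ^ j)) :
    constantCoeff G ≤ 0 := by
  set a : PowerSeries ℝ := 1 + X with ha
  set b : PowerSeries ℝ := 1 - X with hb
  have haa : a * a⁻¹ = 1 := PowerSeries.mul_inv_cancel _ (by simp [ha])
  have hbb : b * b⁻¹ = 1 := PowerSeries.mul_inv_cancel _ (by simp [hb])
  generalize hA : a⁻¹ = A at haa
  generalize hB : b⁻¹ = B at hbb
  have hdA : PowerSeries.derivative ℝ A = - A ^ 2 := by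
    have h := congrArg (PowerSeries.derivative ℝ) haa
    rw [Derivation.leibniz] at h
    have h1 : PowerSeries.derivative ℝ a = 1 := by simp [ha, PowerSeries.derivative_X]
    have h2 : PowerSeries.derivative ℝ (1 : PowerSeries ℝ) = 0 := by simp
    rw [h1, h2] at h
    simp only [smul_eq_mul] at h
    linear_combination A * h - PowerSeries.derivative ℝ A * haa
  set u := b ^ 2 * A ^ 4
  set v := a ^ 4 * B ^ 2
  have huv : u * v = 1 := by
    calc u * v = (a * A) ^ 4 * (b * B) ^ 2 := by simp only [u, v]; ring
      _ = 1 := by rw [haa, hbb]; simp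
  have h1 : P * A ^ m = ∑ j ∈ range (k + 1), C (c j) * (X ^ j * u ^ j) := by
    rw [hs, Finset.sum_mul]
    refine Finset.sum_congr rfl fun j hj => ?_
    rw [Finset.mem_range] at hj
    obtain ⟨q, rfl⟩ : ∃ q, m = q + 4 * j := ⟨m - 4 * j, by omega⟩
    rw [Nat.add_sub_cancel]
    calc _ = C (c j) * (X ^ j * u ^ j) * (a * A) ^ q := by simp only [u]; ring
      _ = _ := by rw [haa]; simp
  have h2 : lagL v (k + 1) (P * A ^ m) = 0 := by
    rw [h1, lagL_sum]
    apply Finset.sum_eq_zero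
    intro j hj
    rw [lagL_pow u v huv _ _ (Finset.mem_range.1 hj), mul_zero]
  rw [hP, add_mul, one_mul, mul_assoc, lagL_add, lagL_high] at h2
  have hcA : constantCoeff A = 1 := by
    have := congrArg constantCoeff haa
    simpa [ha] using this
  have hcB : constantCoeff B = 1 := by
    have := congrArg constantCoeff hbb
    simpa [hb] using this
  have hcv : constantCoeff v = 1 := by simp [v, ha, hcB]
  rw [hcv] at h2
  simp only [map_mul, map_pow, hcA, one_pow, mul_one] at h2
  have h3 := lagL_parts v (A ^ m) k
  obtain ⟨m', rfl⟩ : ∃ m', m = m' + 1 := ⟨m - 1, by omega⟩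
  have e : PowerSeries.derivative ℝ (A ^ (m' + 1)) * v ^ (k + 1)
      = C (-(m' + 1 : ℝ)) * (b ^ r * (A * B) ^ (2 * (k + 1) + r)) := by
    rw [Derivation.leibniz_pow, hdA]
    simp only [Nat.add_sub_cancel, smul_eq_mul, nsmul_eq_mul, Nat.cast_add, Nat.cast_one]
    have h2 : C (-(m' + 1 : ℝ)) = -((m' : PowerSeries ℝ) + 1) := by simp
    rw [h2]
    calc _ = -((m' : PowerSeries ℝ) + 1) * (A ^ (m' + 1 + 1) * v ^ (k + 1)) := by ring
      _ = -((m' : PowerSeries ℝ) + 1) * (b ^ r * (A * B) ^ (2 * (k + 1) + r)) := by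
        congr 1
        rw [hm]
        calc _ = A ^ (2 * (k + 1) + r) * B ^ (2 * (k + 1)) * (a * A) ^ (4 * (k + 1)) := by
              simp only [v]; ring
          _ = A ^ (2 * (k + 1) + r) * B ^ (2 * (k + 1)) * (b * B) ^ r := by rw [haa, hbb]; simp
          _ = _ := by ring
  rw [e, coeff_C_mul] at h3
  have hw : AltSign (A * B) := altSign_w _ (by
    calc _ = (a * A) * (b * B) := by rw [ha, hb]; ring
      _ = 1 := by rw [haa, hbb, one_mul])
  have h4 := ((altSign_b.pow r).mul (hw.pow (2 * (k + 1) + r))) k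
  rw [hk.neg_one_pow] at h4
  have h5 : 0 ≤ ((k : ℝ) + 1) * lagL v (k + 1) (A ^ (m' + 1)) := by
    rw [h3]
    have : (0 : ℝ) ≤ m' + 1 := by positivity
    nlinarith
  have h6 : 0 ≤ lagL v (k + 1) (A ^ (m' + 1)) :=
    nonneg_of_mul_nonneg_right h5 (by positivity)
  linarith

/-- Functional equation (MacWilliams). -/
def FE (N : ℕ) (Q : Polynomial ℝ) : Prop :=
  ∀ t : ℝ, 1 < t → (1 + t) ^ (2 * N) * Q.eval (((1 - t) / (1 + t)) ^ 2) = 2 ^ N * Q.eval (t ^ 2)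

open Filter Topology in
lemma FE.degree_zero {Q : Polynomial ℝ} (h : FE 0 Q) : Q = Polynomial.C (Q.coeff 0) := by
  have h0 : ∀ t : ℝ, 1 < t → Q.eval (((1 - t) / (1 + t)) ^ 2) = Q.eval (t ^ 2) := by
    intro t ht; simpa using h t ht
  -- the polynomial is bounded at infinity
  have hz : Tendsto (fun t : ℝ => ((1 - t) / (1 + t)) ^ 2) atTop (𝓝 1) := by
    have e : (fun t : ℝ => ((1 - t) / (1 + t)) ^ 2) =ᶠ[atTop]
        fun t : ℝ => (2 * (1 + t)⁻¹ - 1) ^ 2 := by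
      filter_upwards [eventually_gt_atTop 0] with t ht
      have : (1 + t) ≠ 0 := by positivity
      field_simp
      ring
    have hi : Tendsto (fun t : ℝ => (1 + t)⁻¹) atTop (𝓝 0) :=
      tendsto_inv_atTop_zero.comp (tendsto_atTop_add_const_left _ _ tendsto_id)
    have := ((hi.const_mul 2).sub_const 1).pow 2
    norm_num at this
    exact this.congr' e.symm
  have h1 : Tendsto (fun t : ℝ => Q.eval (t ^ 2)) atTop (𝓝 (Q.eval 1)) := by
    have := (Q.continuous.tendsto 1).comp hz
    refine this.congr' ?_
    filter_upwards [eventually_gt_atTop 1] with t ht using h0 t ht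
  have h2 : Tendsto (fun t : ℝ => Q.eval t) atTop (𝓝 (Q.eval 1)) := by
    have := h1.comp Real.tendsto_sqrt_atTop
    refine this.congr' ?_
    filter_upwards [eventually_gt_atTop 0] with t ht
    simp [Real.sq_sqrt ht.le]
  have h3 := (Polynomial.tendsto_nhds_iff (P := Q)).1 h2
  exact Polynomial.eq_C_of_degree_le_zero h3.2

open Filter Topology Polynomial in
lemma FE.step {N : ℕ} {Q : Polynomial ℝ} (h : FE (N + 4) Q) :
    ∃ Q' : Polynomial ℝ, FE N Q' ∧
      Q = C (Q.coeff 0) * (1 + X) ^ (N + 4) + X * (1 - X) ^ 2 * Q' := by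
  set R := Q - C (Q.coeff 0) * (1 + X) ^ (N + 4) with hR
  have hQR : Q = C (Q.coeff 0) * (1 + X) ^ (N + 4) + R := by rw [hR]; ring
  have hFR : FE (N + 4) R := by
    intro t ht
    have ht' : (1 + t) ≠ 0 := by positivity
    have := h t ht
    simp only [hR, eval_sub, eval_mul, eval_C, eval_pow, eval_add, eval_one, eval_X]
    rw [mul_sub, mul_sub, this]
    congr 1
    have e : (1 + t) ^ 2 * (1 + ((1 - t) / (1 + t)) ^ 2) = 2 * (1 + t ^ 2) := by
      field_simp; ring
    calc _ = Q.coeff 0 * ((1 + t) ^ 2 * (1 + ((1 - t) / (1 + t)) ^ 2)) ^ (N + 4) := by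
          rw [mul_pow, ← pow_mul]; ring
      _ = _ := by rw [e, mul_pow]; ring
  have hR0 : R.eval 0 = 0 := by
    simp [hR, ← Polynomial.coeff_zero_eq_eval_zero]
  clear_value R
  -- value at one
  have hle : (𝓝[>] (1 : ℝ)) ≤ 𝓝 1 := nhdsWithin_le_nhds
  have hcz : ContinuousAt (fun t : ℝ => ((1 - t) / (1 + t)) ^ 2) 1 := by
    apply ContinuousAt.pow
    apply ContinuousAt.div <;> first | fun_prop | norm_num
  have hcont : ∀ S : Polynomial ℝ,
      ContinuousAt (fun t : ℝ => S.eval (((1 - t) / (1 + t)) ^ 2)) 1 := fun S =>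
    ContinuousAt.comp (g := fun x => S.eval x) S.continuous.continuousAt hcz
  have huniq : ∀ f g : ℝ → ℝ, ContinuousAt f 1 → ContinuousAt g 1 →
      (∀ t, 1 < t → f t = g t) → f 1 = g 1 := by
    intro f g hf hg hfg
    refine tendsto_nhds_unique (hf.tendsto.mono_left hle)
      ((hg.tendsto.mono_left hle).congr' ?_)
    filter_upwards [self_mem_nhdsWithin] with t ht using (hfg t ht).symm
  have hR1 : R.eval 1 = 0 := by
    have := huniq _ (fun t => 2 ^ (N + 4) * R.eval (t ^ 2))
      (((by fun_prop : ContinuousAt (fun t : ℝ => (1 + t) ^ (2 * (N + 4))) 1)).mul (hcont R))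
      (by fun_prop) hFR
    simpa [hR0] using this
  obtain ⟨R1, hR1'⟩ := Polynomial.X_dvd_iff.2 (by
    rw [Polynomial.coeff_zero_eq_eval_zero]; exact hR0 : R.coeff 0 = 0)
  have : R1.eval 1 = 0 := by rw [hR1'] at hR1; simpa using hR1
  obtain ⟨R2, hR2⟩ := Polynomial.dvd_iff_isRoot.2 (show R1.IsRoot 1 from this)
  have hz1 : ∀ t : ℝ, 1 < t → ((1 - t) / (1 + t)) ^ 2 - 1 = -4 * t / (1 + t) ^ 2 := by
    intro t ht
    have ht' : (1 + t) ≠ 0 := by positivity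
    field_simp; ring
  have hR21 : R2.eval 1 = 0 := by
    have := huniq
      (fun t => (1 + t) ^ (2 * (N + 4)) * ((t - 1) / (1 + t) ^ 2 * ((((1 - t) / (1 + t)) ^ 2) - 1)
        * R2.eval (((1 - t) / (1 + t)) ^ 2)))
      (fun t => 2 ^ (N + 4) * (t ^ 2 * (t + 1) * R2.eval (t ^ 2))) ?_ (by fun_prop) ?_
    · simpa using this
    · refine ContinuousAt.mul (by fun_prop) (ContinuousAt.mul (ContinuousAt.mul ?_ ?_) (hcont R2))
      · apply ContinuousAt.div <;> first | fun_prop | norm_num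
      · exact hcz.sub continuousAt_const
    · intro t ht
      have := hFR t ht
      rw [hR1', hR2] at this
      simp only [eval_mul, eval_sub, eval_X, map_one, eval_one] at this
      have h1 : t - 1 ≠ 0 := by linarith
      have ht' : (1 + t) ≠ 0 := by positivity
      apply mul_left_cancel₀ h1
      calc _ = (1 + t) ^ (2 * (N + 4)) * (((1 - t) / (1 + t)) ^ 2 *
              ((((1 - t) / (1 + t)) ^ 2 - 1) * R2.eval (((1 - t) / (1 + t)) ^ 2))) := by
            simp only [div_pow]; ring
        _ = _ := by rw [this]; ring
  obtain ⟨R3, hR3⟩ := Polynomial.dvd_iff_isRoot.2 (show R2.IsRoot 1 from hR21)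
  have hfin : R = X * (1 - X) ^ 2 * R3 := by
    rw [hR1', hR2, hR3]; simp only [map_one]; ring
  refine ⟨R3, ?_, by rw [← hfin]; exact hQR⟩
  intro t ht
  have := hFR t ht
  rw [hfin] at this
  simp only [eval_mul, eval_sub, eval_X, eval_one, eval_pow] at this
  have h1 : t - 1 ≠ 0 := by linarith
  have ht0 : t ≠ 0 := by positivity
  have ht' : (1 + t) ≠ 0 := by positivity
  have hne : (16 * t ^ 2 * (t - 1) ^ 2) * (1 + t) ^ 2 ≠ 0 := by positivity
  apply mul_left_cancel₀ hne
  have e : (1 + t) ^ 8 * (((1 - t) / (1 + t)) ^ 2 * (1 - ((1 - t) / (1 + t)) ^ 2) ^ 2) =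
      16 * t ^ 2 * (t - 1) ^ 2 * (1 + t) ^ 2 := by
    rw [show 1 - ((1 - t) / (1 + t)) ^ 2 = 4 * t / (1 + t) ^ 2 by field_simp; ring]
    field_simp; ring
  rw [← e]
  calc _ = (1 + t) ^ (2 * (N + 4)) * (((1 - t) / (1 + t)) ^ 2 *
        (1 - ((1 - t) / (1 + t)) ^ 2) ^ 2 * R3.eval (((1 - t) / (1 + t)) ^ 2)) := by
        rw [show 2 * (N + 4) = 2 * N + 8 by ring, pow_add]; ring
    _ = _ := by rw [this, e]; ring

open Polynomial in
lemma FE.gleason (M : ℕ) : ∀ {Q : Polynomial ℝ}, FE (4 * M) Q → ∃ c : ℕ → ℝ,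
    Q = ∑ j ∈ range (M + 1), C (c j) * ((1 + X) ^ (4 * (M - j)) * (X * (1 - X) ^ 2) ^ j) := by
  induction M with
  | zero =>
    intro Q h
    refine ⟨fun _ => Q.coeff 0, ?_⟩
    simpa using h.degree_zero
  | succ M ih =>
    intro Q h
    obtain ⟨Q', hQ', hQ⟩ := FE.step (N := 4 * M) h
    obtain ⟨c, hc⟩ := ih hQ'
    refine ⟨fun j => if j = 0 then Q.coeff 0 else c (j - 1), ?_⟩
    rw [Finset.sum_range_succ']
    conv_lhs => rw [hQ, hc]
    simp only [Nat.add_eq_zero_iff, one_ne_zero, and_false, if_false, Nat.add_sub_cancel,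
      Nat.add_sub_add_right, if_true, pow_zero, mul_one, Nat.sub_zero]
    rw [add_comm, Finset.mul_sum, show 4 * (M + 1) = 4 * M + 4 by ring]
    congr 1
    refine Finset.sum_congr rfl fun j _ => ?_
    rw [pow_succ (X * (1 - X) ^ 2)]
    ring

/-- The sign character of `ZMod 2`. -/
def sgn2 (b : ZMod 2) : ℝ := if b = 0 then 1 else -1

lemma sgn2_add (a b : ZMod 2) : sgn2 (a + b) = sgn2 a * sgn2 b := by
  have h2 : ∀ a : ZMod 2, a = 0 ∨ a = 1 := by decide
  have h3 : (1 + 1 : ZMod 2) = 0 := rfl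
  unfold sgn2
  rcases h2 a with rfl | rfl <;> rcases h2 b with rfl | rfl <;> simp [h3]

lemma sgn2_sum {ι : Type*} (s : Finset ι) (f : ι → ZMod 2) :
    sgn2 (∑ i ∈ s, f i) = ∏ i ∈ s, sgn2 (f i) := by
  classical
  induction s using Finset.induction_on with
  | empty => simp [sgn2]
  | insert a s ha ih => rw [Finset.sum_insert ha, Finset.prod_insert ha, sgn2_add, ih]

lemma wt_def {n : ℕ} (x : Fin n → ZMod 2) : wt x = #{i | x i ≠ 0} := rfl

lemma wt_le {n : ℕ} (x : Fin n → ZMod 2) : wt x ≤ n := by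
  rw [wt_def]; simpa using Finset.card_le_univ (α := Fin n) {i | x i ≠ 0}

lemma prod_wt {n : ℕ} (x : Fin n → ZMod 2) (a b : ℝ) :
    ∏ i, (if x i = 0 then a else b) = b ^ wt x * a ^ (n - wt x) := by
  rw [Finset.prod_ite, Finset.prod_const, Finset.prod_const]
  have h := Finset.card_filter_add_card_filter_not (s := (univ : Finset (Fin n)))
    (p := fun i => x i = 0)
  rw [Finset.card_univ, Fintype.card_fin] at h
  have h2 : wt x = #{i | ¬ x i = 0} := rfl
  rw [← h2] at h ⊢
  rw [show #{i | x i = 0} = n - wt x by omega]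
  ring

lemma macw_term {n : ℕ} (c : Fin n → ZMod 2) (t : ℝ) :
    (1 - t) ^ wt c * (1 + t) ^ (n - wt c) =
      ∑ x : Fin n → ZMod 2, sgn2 (∑ i, x i * c i) * t ^ wt x := by
  rw [← prod_wt]
  have h1 : ∀ i, (if c i = 0 then 1 + t else 1 - t) =
      ∑ b : ZMod 2, sgn2 (b * c i) * (if b = 0 then 1 else t) := by
    intro i
    have : ∀ f : ZMod 2 → ℝ, ∑ b, f b = f 0 + f 1 := fun f => Fin.sum_univ_two f
    rw [this]
    by_cases h : c i = 0
    · simp [h, sgn2]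
    · simp [h, sgn2]; ring
  simp_rw [h1]
  rw [Finset.prod_univ_sum, Fintype.piFinset_univ]
  refine Finset.sum_congr rfl fun x _ => ?_
  rw [Finset.prod_mul_distrib, sgn2_sum, prod_wt, one_pow, mul_one]

open Classical in
lemma char_sum {n : ℕ} (C : Submodule (ZMod 2) (Fin n → ZMod 2)) (x : Fin n → ZMod 2) :
    ∑ c with c ∈ C, sgn2 (∑ i, x i * c i) =
      if x ∈ dualSet (C : Set (Fin n → ZMod 2)) then (#{c | c ∈ C} : ℝ) else 0 := by
  split_ifs with h
  · rw [Finset.sum_congr rfl (g := fun _ => (1 : ℝ))]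
    · simp
    · intro c hc
      rw [Finset.mem_filter] at hc
      rw [h c hc.2]; simp [sgn2]
  · simp only [dualSet, Set.mem_ofPred_eq, not_forall] at h
    obtain ⟨y, hy, hxy⟩ := h
    have hs : sgn2 (∑ i, x i * y i) = -1 := by simp [sgn2, hxy]
    have key : ∑ c with c ∈ C, sgn2 (∑ i, x i * c i) =
        ∑ c with c ∈ C, - sgn2 (∑ i, x i * c i) := by
      refine Finset.sum_bij' (fun c _ => c + y) (fun c _ => c - y) ?_ ?_ ?_ ?_ ?_
      · intro c hc; simp only [Finset.mem_filter, mem_univ, true_and] at hc ⊢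
        exact C.add_mem hc hy
      · intro c hc; simp only [Finset.mem_filter, mem_univ, true_and] at hc ⊢
        exact C.sub_mem hc hy
      · intro c _; simp
      · intro c _; simp
      · intro c _
        simp only [Pi.add_apply, mul_add, Finset.sum_add_distrib, sgn2_add, hs]
        ring
    rw [Finset.sum_neg_distrib] at key
    linarith

open Classical in
/-- MacWilliams identity. -/
lemma macwilliams {n : ℕ} (C : Submodule (ZMod 2) (Fin n → ZMod 2)) (t : ℝ) :
    ∑ c with c ∈ C, (1 - t) ^ wt c * (1 + t) ^ (n - wt c) =
      (#{c | c ∈ C} : ℝ) * ∑ x with x ∈ dualSet (C : Set (Fin n → ZMod 2)), t ^ wt x := by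
  simp_rw [macw_term]
  rw [Finset.sum_comm, Finset.mul_sum, Finset.sum_filter]
  refine Finset.sum_congr rfl fun x _ => ?_
  rw [← Finset.sum_mul, char_sum]
  split_ifs <;> simp

lemma wt_add {n : ℕ} (x y : Fin n → ZMod 2) :
    wt (x + y) + 2 * #{i | x i ≠ 0 ∧ y i ≠ 0} = wt x + wt y := by
  simp only [wt_def, Finset.card_filter, Finset.mul_sum, ← Finset.sum_add_distrib]
  refine Finset.sum_congr rfl fun i _ => ?_
  rw [Pi.add_apply]
  generalize x i = a
  generalize y i = b
  revert a b
  decide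

lemma ip_eq {n : ℕ} (x y : Fin n → ZMod 2) :
    ∑ i, x i * y i = ((#{i | x i ≠ 0 ∧ y i ≠ 0} : ℕ) : ZMod 2) := by
  rw [Finset.card_filter, Nat.cast_sum]
  refine Finset.sum_congr rfl fun i _ => ?_
  generalize x i = a
  generalize y i = b
  revert a b
  decide

section selfdual
variable {n : ℕ} {C : Submodule (ZMod 2) (Fin n → ZMod 2)}

lemma sd_ip (h : IsSelfDual C) {x y : Fin n → ZMod 2} (hx : x ∈ C) (hy : y ∈ C) :
    2 ∣ #{i | x i ≠ 0 ∧ y i ≠ 0} := by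
  have : x ∈ dualSet (C : Set (Fin n → ZMod 2)) := by rw [← h]; exact hx
  have := this y hy
  rw [ip_eq] at this
  exact (ZMod.natCast_eq_zero_iff _ _).1 this

lemma sd_even (h : IsSelfDual C) {x : Fin n → ZMod 2} (hx : x ∈ C) : 2 ∣ wt x := by
  have := sd_ip h hx hx
  simpa [wt_def] using this

lemma sd_add (h : IsSelfDual C) {x y : Fin n → ZMod 2} (hx : x ∈ C) (hy : y ∈ C) :
    wt (x + y) % 4 = (wt x + wt y) % 4 := by
  have h1 := sd_ip h hx hy
  have h2 := wt_add x y
  omega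

/-- The doubly even subcode as a submodule. -/
def evenSubmodule (h : IsSelfDual C) : Submodule (ZMod 2) (Fin n → ZMod 2) where
  carrier := evenSub C
  zero_mem' := ⟨C.zero_mem, by simp [wt]⟩
  add_mem' := by
    rintro x y ⟨hx, hx4⟩ ⟨hy, hy4⟩
    have := sd_add h hx hy
    exact ⟨C.add_mem hx hy, by omega⟩
  smul_mem' := by
    rintro a x ⟨hx, hx4⟩
    refine ⟨C.smul_mem a hx, ?_⟩
    rcases (by revert a; decide : ∀ a : ZMod 2, a = 0 ∨ a = 1) a with rfl | rfl
    · simp [wt]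
    · simpa using hx4

open Classical in
lemma sd_card (h : IsSelfDual C) : ∃ m, n = 2 * m ∧ #{c | c ∈ C} = 2 ^ m := by
  have h1 := macwilliams C 1
  rw [← h] at h1
  simp only [one_pow, sub_self, Finset.sum_const, nsmul_eq_mul, mul_one, SetLike.mem_coe] at h1
  rw [Finset.sum_eq_single 0] at h1
  · have h2 : (2 : ℕ) ^ n = #{c | c ∈ C} * #{c | c ∈ C} := by
      have e : ((1 : ℝ) + 1) = 2 := by norm_num
      rw [e] at h1
      simp only [wt, hammingNorm_zero, pow_zero, one_mul, Nat.sub_zero] at h1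
      exact_mod_cast h1
    obtain ⟨m, -, hm⟩ := (Nat.dvd_prime_pow Nat.prime_two).1 (Dvd.intro _ h2.symm)
    refine ⟨m, ?_, hm⟩
    rw [hm, ← pow_add] at h2
    have := Nat.pow_right_injective le_rfl h2
    omega
  · intro b _ hb
    have : wt b ≠ 0 := by simpa [wt] using hb
    simp [this]
  · intro h0
    exact absurd (by simp) h0

open Classical in
lemma card_evenSub (h : IsSinglyEvenSelfDual C) :
    #{c | c ∈ C} = 2 * #{c | c ∈ evenSubmodule h.1} := by
  obtain ⟨y, hy, hy4⟩ := h.2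
  have hmem : ∀ c, c ∈ evenSubmodule h.1 ↔ c ∈ C ∧ 4 ∣ wt c := fun c => Iff.rfl
  have h1 : #{c | c ∈ C} = #{c | c ∈ C ∧ 4 ∣ wt c} + #{c | c ∈ C ∧ ¬ 4 ∣ wt c} := by
    rw [← Finset.card_filter_add_card_filter_not (p := fun c => 4 ∣ wt c), Finset.filter_filter,
      Finset.filter_filter]
  have hy2 := sd_even h.1 hy
  have h2 : #{c | c ∈ C ∧ 4 ∣ wt c} = #{c | c ∈ C ∧ ¬ 4 ∣ wt c} := by
    have hyy : y + y = 0 := by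
      ext i; exact CharTwo.add_self_eq_zero _
    refine Finset.card_bij' (fun c _ => c + y) (fun c _ => c + y) ?_ ?_ ?_ ?_
    · intro c hc
      simp only [Finset.mem_filter, mem_univ, true_and] at hc ⊢
      have := sd_add h.1 hc.1 hy
      exact ⟨C.add_mem hc.1 hy, by omega⟩
    · intro c hc
      simp only [Finset.mem_filter, mem_univ, true_and] at hc ⊢
      have := sd_add h.1 hc.1 hy
      have := sd_even h.1 hc.1
      exact ⟨C.add_mem hc.1 hy, by omega⟩
    · intro c _; simp [add_assoc, hyy]
    · intro c _; simp [add_assoc, hyy]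
  simp_rw [hmem]
  omega

open Classical in
/-- The weight enumerator in the variable `z = y ^ 2`. -/
noncomputable def wtPoly (C : Submodule (ZMod 2) (Fin n → ZMod 2)) : Polynomial ℝ :=
  ∑ c with c ∈ C, Polynomial.X ^ (wt c / 2)

open Classical in
lemma wtPoly_eval_sq (h : IsSelfDual C) (t : ℝ) :
    (wtPoly C).eval (t ^ 2) = ∑ c with c ∈ C, t ^ wt c := by
  simp only [wtPoly, Polynomial.eval_finsetSum, Polynomial.eval_pow, Polynomial.eval_X]
  refine Finset.sum_congr rfl fun c hc => ?_
  have := sd_even h (Finset.mem_filter.1 hc).2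
  rw [← pow_mul, Nat.mul_div_cancel' this]

open Classical in
lemma wtPoly_FE {m : ℕ} (h : IsSelfDual C) (hn : n = 2 * m) (hC : #{c | c ∈ C} = 2 ^ m) :
    FE m (wtPoly C) := by
  intro t ht
  have ht' : (1 + t) ≠ 0 := by positivity
  rw [wtPoly_eval_sq h, wtPoly_eval_sq h]
  have h1 := macwilliams C t
  rw [← h, hC] at h1
  push_cast at h1
  simp only [SetLike.mem_coe] at h1
  rw [← h1, Finset.mul_sum, ← hn]
  refine Finset.sum_congr rfl fun c _ => ?_
  have := wt_le c
  obtain ⟨q, hq⟩ : ∃ q, n = q + wt c := ⟨n - wt c, by omega⟩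
  rw [show n - wt c = q by omega]
  have hpw : (1 + t) ^ n = (1 + t) ^ q * (1 + t) ^ wt c := by rw [← pow_add, ← hq]
  rw [hpw, div_pow]
  field_simp

open Classical in
lemma wtPoly_shadow {m : ℕ} (h : IsSinglyEvenSelfDual C) (hC : #{c | c ∈ C} = 2 ^ m)
    (t : ℝ) (ht : 0 < t) :
    (1 + t) ^ n * (wtPoly C).eval (-((1 - t) / (1 + t)) ^ 2) =
      2 ^ m * ∑ c with c ∈ shadow C, t ^ wt c := by
  have ht' : (1 + t) ≠ 0 := by positivity
  have h1 := macwilliams C t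
  have h2 := macwilliams (evenSubmodule h.1) t
  have hcard := card_evenSub h
  have hmem : ∀ c, c ∈ evenSubmodule h.1 ↔ c ∈ C ∧ 4 ∣ wt c := fun c => Iff.rfl
  have hset : ((evenSubmodule h.1 : Submodule _ _) : Set (Fin n → ZMod 2)) = evenSub C := rfl
  rw [← h.1] at h1
  rw [hset] at h2
  simp only [SetLike.mem_coe] at h1
  have hsub : ∀ c, c ∈ C → c ∈ dualSet (evenSub C) := by
    intro c hc y hy
    have : c ∈ dualSet (C : Set (Fin n → ZMod 2)) := by rw [← h.1]; exact hc
    exact this y hy.1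
  have h3 : ∑ c with c ∈ dualSet (evenSub C), t ^ wt c =
      ∑ c with c ∈ C, t ^ wt c + ∑ c with c ∈ shadow C, t ^ wt c := by
    rw [← Finset.sum_filter_add_sum_filter_not _ (fun c => c ∈ C), Finset.filter_filter,
      Finset.filter_filter]
    congr 1
    · refine Finset.sum_congr ?_ fun _ _ => rfl
      ext c; simp only [Finset.mem_filter, mem_univ, true_and]
      exact ⟨fun q => q.2, fun q => ⟨hsub c q, q⟩⟩
    · refine Finset.sum_congr ?_ fun _ _ => rfl
      ext c; simp only [Finset.mem_filter, mem_univ, true_and]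
      exact Iff.rfl
  have h4 : (1 + t) ^ n * (wtPoly C).eval (-((1 - t) / (1 + t)) ^ 2) =
      2 * ∑ c with c ∈ evenSubmodule h.1, (1 - t) ^ wt c * (1 + t) ^ (n - wt c) -
      ∑ c with c ∈ C, (1 - t) ^ wt c * (1 + t) ^ (n - wt c) := by
    have e : ∑ c with c ∈ evenSubmodule h.1, (1 - t) ^ wt c * (1 + t) ^ (n - wt c) =
        ∑ c with c ∈ C, if 4 ∣ wt c then (1 - t) ^ wt c * (1 + t) ^ (n - wt c) else 0 := by
      rw [← Finset.sum_filter, Finset.filter_filter]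
      simp only [hmem]
    rw [e, Finset.mul_sum, ← Finset.sum_sub_distrib]
    simp only [wtPoly, Polynomial.eval_finsetSum, Polynomial.eval_pow, Polynomial.eval_X,
      Finset.mul_sum]
    refine Finset.sum_congr rfl fun c hc => ?_
    have hev := sd_even h.1 (Finset.mem_filter.1 hc).2
    have := wt_le c
    obtain ⟨q, hq⟩ : ∃ q, n = q + wt c := ⟨n - wt c, by omega⟩
    have e1 : (1 + t) ^ n * (-((1 - t) / (1 + t)) ^ 2) ^ (wt c / 2) =
        (-1) ^ (wt c / 2) * ((1 - t) ^ wt c * (1 + t) ^ (n - wt c)) := by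
      rw [neg_pow, ← pow_mul, Nat.mul_div_cancel' hev, show n - wt c = q by omega]
      have hpw : (1 + t) ^ n = (1 + t) ^ q * (1 + t) ^ wt c := by rw [← pow_add, ← hq]
      rw [hpw, div_pow]
      field_simp
    rw [e1]
    split_ifs with h4
    · rw [Even.neg_one_pow (by rw [Nat.even_iff]; omega)]; ring
    · rw [Odd.neg_one_pow (by rw [Nat.odd_iff]; omega)]; ring
  rw [h4, h1, h2, h3]
  have : (2 : ℝ) ^ m = 2 * (#{c | c ∈ evenSubmodule h.1} : ℝ) := by
    rw [hC] at hcard; exact_mod_cast hcard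
  rw [hC]; push_cast; rw [this]; ring

open Classical Filter Topology Polynomial in
lemma wtPoly_dvd {m s : ℕ} (h : IsSinglyEvenSelfDual C) (hC : #{c | c ∈ C} = 2 ^ m)
    (hs : ∀ c ∈ shadow C, s ≤ wt c) (hn : n = 2 * m) :
    ∃ Q : Polynomial ℝ, wtPoly C = (1 + X) ^ s * Q := by
  have hP0 : wtPoly C ≠ 0 := by
    intro h0
    have := wtPoly_eval_sq h.1 1
    rw [h0] at this
    simp [hC] at this
    have h2 : (0 : ℝ) < 2 ^ m := by positivity
    linarith
  obtain ⟨Q, hQ, hQ1⟩ := Polynomial.exists_eq_pow_rootMultiplicity_mul_and_not_dvd _ hP0 (-1)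
  set a := rootMultiplicity (-1) (wtPoly C)
  have hX : (X - Polynomial.C (-1) : Polynomial ℝ) = 1 + X := by
    simp only [map_neg, map_one]; ring
  rw [hX] at hQ
  have hQe : Q.eval (-1) ≠ 0 := fun h0 => hQ1 (Polynomial.dvd_iff_isRoot.2 h0)
  by_cases has : s ≤ a
  · obtain ⟨q, hq⟩ := Nat.exists_eq_add_of_le has
    exact ⟨(1 + X) ^ q * Q, by rw [hQ, hq, pow_add]; ring⟩
  · exfalso
    push Not at has
    have key : ∀ t : ℝ, 0 < t → (1 + t) ^ n * ((4 / (1 + t) ^ 2) ^ a *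
        Q.eval (-((1 - t) / (1 + t)) ^ 2)) =
        2 ^ m * ∑ c with c ∈ shadow C, t ^ (wt c - a) := by
      intro t ht
      have ht' : (1 + t) ≠ 0 := by positivity
      have h1 := wtPoly_shadow h hC t ht
      rw [hQ] at h1
      simp only [eval_mul, eval_pow, eval_add, eval_one, eval_X] at h1
      have e : 1 + -((1 - t) / (1 + t)) ^ 2 = t * (4 / (1 + t) ^ 2) := by
        field_simp; ring
      rw [e, mul_pow] at h1
      have hta : t ^ a ≠ 0 := by positivity
      apply mul_left_cancel₀ hta
      refine Eq.trans (Eq.trans (by ring) h1) ?_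
      rw [mul_left_comm]
      congr 1
      rw [Finset.mul_sum]
      refine Finset.sum_congr rfl fun c hc => ?_
      have := hs c (Finset.mem_filter.1 hc).2
      rw [← pow_add]; congr 1; omega
    have hcz : ContinuousAt (fun t : ℝ => -((1 - t) / (1 + t)) ^ 2) 0 := by
      apply ContinuousAt.neg
      apply ContinuousAt.pow
      apply ContinuousAt.div <;> first | fun_prop | norm_num
    have hcl : ContinuousAt (fun t : ℝ => (1 + t) ^ n * ((4 / (1 + t) ^ 2) ^ a *
        Q.eval (-((1 - t) / (1 + t)) ^ 2))) 0 := by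
      refine ContinuousAt.mul (by fun_prop) (ContinuousAt.mul (ContinuousAt.pow ?_ _) ?_)
      · apply ContinuousAt.div <;> first | fun_prop | norm_num
      · exact ContinuousAt.comp (g := fun x => Q.eval x) Q.continuous.continuousAt hcz
    have hcr : ContinuousAt (fun t : ℝ => (2 : ℝ) ^ m *
        ∑ c with c ∈ shadow C, t ^ (wt c - a)) 0 := by fun_prop
    have hle : (𝓝[>] (0 : ℝ)) ≤ 𝓝 0 := nhdsWithin_le_nhds
    have h0 := tendsto_nhds_unique (hcl.tendsto.mono_left hle)
      ((hcr.tendsto.mono_left hle).congr' (by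
        filter_upwards [self_mem_nhdsWithin] with t ht using (key t ht).symm))
    have hz : ∑ c with c ∈ shadow C, (0 : ℝ) ^ (wt c - a) = 0 := by
      apply Finset.sum_eq_zero
      intro c hc
      have := hs c (Finset.mem_filter.1 hc).2
      rw [zero_pow]; omega
    rw [hz] at h0
    simp [hQe] at h0

end selfdual

lemma minWt_le {n : ℕ} {S : Set (Fin n → ZMod 2)} {x : Fin n → ZMod 2} (hx : x ∈ S) (h0 : x ≠ 0) :
    minWtSet S ≤ wt x := Nat.sInf_le ⟨x, hx, h0, rfl⟩

open Classical in
lemma sExtremal_main {n d : ℕ} (hd : 4 ∣ d) {C : Submodule (ZMod 2) (Fin n → ZMod 2)}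
    (hC : IsSExtremal C) (hmin : minWt C = d) : n ≤ 6 * d - 4 := by
  obtain ⟨hse, hext⟩ := hC
  obtain ⟨m, hn, hcard⟩ := sd_card hse.1
  obtain ⟨x0, hx0, hx04⟩ := hse.2
  have hne : {w | ∃ x ∈ (C : Set (Fin n → ZMod 2)), x ≠ 0 ∧ wt x = w}.Nonempty := by
    refine ⟨wt x0, x0, hx0, ?_, rfl⟩
    rintro rfl
    exact hx04 (by simp [wt])
  obtain ⟨y, hyC, hy0, hyd⟩ := Nat.sInf_mem hne
  have hyd' : wt y = d := by rw [hyd, ← hmin]; rfl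
  have hdpos : 0 < d := by
    rw [← hyd']
    exact Nat.pos_of_ne_zero (by simpa [wt] using hy0)
  by_contra hlt
  push Not at hlt
  obtain ⟨e, rfl⟩ : ∃ e, d = 4 * (e + 1) := by
    obtain ⟨e, he⟩ := hd
    exact ⟨e - 1, by omega⟩
  -- k + 1 = d / 2, k = 2 e + 1
  rw [hmin] at hext
  obtain ⟨s, hs⟩ : ∃ s, minWtSet (shadow C) = s := ⟨_, rfl⟩
  rw [hs] at hext
  have hms : m = s + 4 * (2 * e + 1) := by
    have : n / 2 = m := by omega
    rw [this] at hext
    push_cast at hext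
    omega
  have hsh : ∀ c ∈ shadow C, s ≤ wt c := by
    intro c hc
    rw [← hs]
    refine minWt_le hc ?_
    rintro rfl
    exact hc.2 C.zero_mem
  obtain ⟨Q, hQ⟩ := wtPoly_dvd hse hcard hsh hn
  have hFP := wtPoly_FE hse.1 hn hcard
  have hFQ : FE (4 * (2 * e + 1)) Q := by
    intro t ht
    have ht' : (1 + t) ≠ 0 := by positivity
    have h1 := hFP t ht
    rw [hQ] at h1
    simp only [Polynomial.eval_mul, Polynomial.eval_pow, Polynomial.eval_add, Polynomial.eval_one,
      Polynomial.eval_X] at h1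
    have e1 : (1 + t) ^ 2 * (1 + ((1 - t) / (1 + t)) ^ 2) = 2 * (1 + t ^ 2) := by
      field_simp; ring
    have hne : (2 * (1 + t ^ 2)) ^ s ≠ 0 := by positivity
    apply mul_left_cancel₀ hne
    calc _ = ((1 + t) ^ 2 * (1 + ((1 - t) / (1 + t)) ^ 2)) ^ s *
          ((1 + t) ^ (2 * (4 * (2 * e + 1))) * Q.eval (((1 - t) / (1 + t)) ^ 2)) := by rw [e1]
      _ = (1 + t) ^ (2 * m) * ((1 + ((1 - t) / (1 + t)) ^ 2) ^ s *
          Q.eval (((1 - t) / (1 + t)) ^ 2)) := by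
        rw [hms, mul_pow, ← pow_mul, mul_add 2 s, pow_add]; ring
      _ = _ := by rw [h1, hms, pow_add, mul_pow]; ring
  obtain ⟨c, hc⟩ := FE.gleason _ hFQ
  -- expansion of the weight enumerator
  set G : Polynomial ℝ := ∑ x with x ∈ C ∧ x ≠ 0, Polynomial.X ^ (wt x / 2 - (2 * e + 1 + 1))
    with hG
  have hPG : wtPoly C = 1 + Polynomial.X ^ (2 * e + 1 + 1) * G := by
    have h0 : (0 : Fin n → ZMod 2) ∈ ({c | c ∈ C} : Finset _) := by simp
    rw [wtPoly, ← Finset.add_sum_erase _ _ h0, hG, Finset.mul_sum]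
    congr 1
    · simp [wt]
    · refine Finset.sum_congr ?_ fun x hx => ?_
      · ext x; simp [and_comm]
      · simp only [Finset.mem_filter, mem_univ, true_and] at hx
        have h1 : minWt C ≤ wt x := minWt_le hx.1 hx.2
        rw [hmin] at h1
        rw [← pow_add]; congr 1; omega
  have hG1 : 1 ≤ G.coeff 0 := by
    rw [Polynomial.coeff_zero_eq_eval_zero, hG, Polynomial.eval_finsetSum]
    simp only [Polynomial.eval_pow, Polynomial.eval_X]
    have hy : y ∈ ({x | x ∈ C ∧ x ≠ 0} : Finset (Fin n → ZMod 2)) := by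
      simp only [Finset.mem_filter, mem_univ, true_and]; exact ⟨hyC, hy0⟩
    have := Finset.single_le_sum
      (f := fun x : Fin n → ZMod 2 => (0 : ℝ) ^ (wt x / 2 - (2 * e + 1 + 1)))
      (fun x _ => by positivity) hy
    rw [show wt y / 2 - (2 * e + 1 + 1) = 0 by omega] at this
    simpa using this
  have hfin := ps_final (2 * e + 1) (m + 1 - 6 * (2 * e + 1 + 1)) m ⟨e, rfl⟩ (by omega)
    (G : PowerSeries ℝ) (wtPoly C : PowerSeries ℝ) c (by rw [hPG]; push_cast; rfl) (by
      have : wtPoly C = ∑ j ∈ range (2 * e + 1 + 1), Polynomial.C (c j) *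
          ((1 + Polynomial.X) ^ (m - 4 * j) * (Polynomial.X * (1 - Polynomial.X) ^ 2) ^ j) := by
        rw [hQ, hc, Finset.mul_sum]
        refine Finset.sum_congr rfl fun j hj => ?_
        rw [Finset.mem_range] at hj
        rw [show m - 4 * j = s + 4 * (2 * e + 1 - j) by omega, pow_add]
        ring
      rw [this, ← Polynomial.coeToPowerSeries.ringHom_apply, map_sum]
      simp)
  have : PowerSeries.constantCoeff (G : PowerSeries ℝ) = G.coeff 0 := by simp
  linarith

/-- If there exists an s-extremal singly even self-dual `[n, n/2, d]` code with
`d ≡ 0 (mod 4)`, then `n ≤ 6d - 4`; in particular, if there exists an s-extremal singly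
even self-dual code of length `n` with minimum weight `8`, then `n ≤ 44`. -/
theorem sExtremal_length_bound_div4 :
    (∀ n d : ℕ, 4 ∣ d →
      (∃ C : Submodule (ZMod 2) (Fin n → ZMod 2),
        IsSExtremal C ∧ Module.finrank (ZMod 2) C = n / 2 ∧ minWt C = d) →
      n ≤ 6 * d - 4) ∧
    (∀ n : ℕ,
      (∃ C : Submodule (ZMod 2) (Fin n → ZMod 2), IsSExtremal C ∧ minWt C = 8) →
      n ≤ 44) := by
  refine ⟨?_, ?_⟩
  · rintro n d hd ⟨C, hC, -, hmin⟩
    exact sExtremal_main hd hC hmin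
  · rintro n ⟨C, hC, hmin⟩
    exact sExtremal_main (d := 8) (by norm_num) hC hmin
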